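/- A continuous function f : (0,∞) → (0,∞) is operator monotone if and only if f(A !_t B) ≤ f(A) !_t f(B) for every n ∈ ℕ, all n×n positive definite complex matrices A, B, and every t ∈ [0,1]. -/

import Mathlib

open Matrix
open scoped ComplexOrder

/-- The Loewner order on matrices: `A ≤ B` iff `B - A` is positive semidefinite. -/
def MLE {n : ℕ} (A B : Matrix (Fin n) (Fin n) ℂ) : Prop := (B - A).PosSemidef

/-- The `t`-weighted harmonic mean `A !_t B = ((1-t)A⁻¹ + tB⁻¹)⁻¹`. -/
noncomputable def wharm {n : ℕ} (t : ℝ) (A B : Matrix (Fin n) (Fin n) ℂ) :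
    Matrix (Fin n) (Fin n) ℂ := ((1 - t) • A⁻¹ + t • B⁻¹)⁻¹

/-- The `t`-weighted arithmetic mean `A ∇_t B = (1-t)A + tB`. -/
noncomputable def warith {n : ℕ} (t : ℝ) (A B : Matrix (Fin n) (Fin n) ℂ) :
    Matrix (Fin n) (Fin n) ℂ := (1 - t) • A + t • B

/-- Real powers of a matrix, via the continuous functional calculus. -/
noncomputable def mpow {n : ℕ} (A : Matrix (Fin n) (Fin n) ℂ) (r : ℝ) :
    Matrix (Fin n) (Fin n) ℂ := cfc (fun x : ℝ => x ^ r) A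

/-- The `t`-weighted geometric mean `A #_t B = A^{1/2} (A^{-1/2} B A^{-1/2})^t A^{1/2}`. -/
noncomputable def wgeom {n : ℕ} (t : ℝ) (A B : Matrix (Fin n) (Fin n) ℂ) :
    Matrix (Fin n) (Fin n) ℂ :=
  mpow A (1/2) * mpow (mpow A (-(1/2)) * B * mpow A (-(1/2))) t * mpow A (1/2)

/-- `f` is operator monotone (increasing): order preserving on positive definite
matrices of every size, via the continuous functional calculus. -/
def OperatorMonotone (f : ℝ → ℝ) : Prop :=
  ∀ (n : ℕ) (A B : Matrix (Fin n) (Fin n) ℂ), A.PosDef → B.PosDef →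
    MLE A B → MLE (cfc f A) (cfc f B)

/-- `f` is operator monotone decreasing: order reversing on positive definite
matrices of every size, via the continuous functional calculus. -/
def OperatorAntitone (f : ℝ → ℝ) : Prop :=
  ∀ (n : ℕ) (A B : Matrix (Fin n) (Fin n) ℂ), A.PosDef → B.PosDef →
    MLE A B → MLE (cfc f B) (cfc f A)

/-!
Write `f*(x) = f(x⁻¹)⁻¹`. As `A !_t B` is the inverse of `A⁻¹ ∇_t B⁻¹` and inversion reverses the
Loewner order, the harmonic inequality for `f` says exactly that `f*` is operator concave, while
`f*` is operator monotone if and only if `f` is. It remains to see that a positive continuous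
function is operator monotone if and only if it is operator concave.

For a monotone `f`, an isometry `V` and the projection `P = V Vᴴ`, the matrix
`D = (1 + ε) P A P + (1 + ε⁻¹) (1 - P) A (1 - P)` dominates `A`, and `D V = V ((1 + ε) Vᴴ A V)`.
Thus `Vᴴ f(A) V ≤ Vᴴ f(D) V = f((1 + ε) Vᴴ A V)`, and `ε → 0` yields the Jensen inequality
`Vᴴ f(A) V ≤ f(Vᴴ A V)`. Concavity is the case of `A ⊕ B` with `V x = (√(1 - t) x, √t x)`.

For a positive concave `f` and `A ≤ B`, write `B ∇_t 1 = A ∇_t C` with `C` positive definite, so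
that `(1 - t) f(A) ≤ f(B ∇_t 1)`, and let `t → 0`.
-/

open Filter Topology Polynomial
open scoped MatrixOrder Matrix.Norms.L2Operator

section Intertwining

variable {𝕜 m n : Type*} [RCLike 𝕜] [Fintype m] [DecidableEq m] [Fintype n] [DecidableEq n]

lemma aeval_mul_eq_mul_aeval {R S : Type*} [CommSemiring R] [CommSemiring S] [Algebra R S]
    {A : Matrix m m S} {B : Matrix n n S} {V : Matrix m n S} (h : A * V = V * B) (p : R[X]) :
    aeval A p * V = V * aeval B p := by
  have pow_mul_eq (k : ℕ) : A ^ k * V = V * B ^ k := by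
    induction k with
    | zero => simp
    | succ k ih => rw [pow_succ, Matrix.mul_assoc, h, ← Matrix.mul_assoc, ih, Matrix.mul_assoc,
        ← pow_succ]
  induction p using Polynomial.induction_on' with
  | add p q hp hq => simp only [map_add, Matrix.add_mul, Matrix.mul_add, hp, hq]
  | monomial k a => simp only [aeval_monomial, ← Algebra.smul_def, Matrix.smul_mul,
      Matrix.mul_smul, pow_mul_eq]

lemma continuousOn_spectrum (f : ℝ → ℝ) (A : Matrix n n 𝕜) : ContinuousOn f (spectrum ℝ A) :=
  Matrix.finite_real_spectrum.continuousOn f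

lemma exists_aeval_eq_cfc {A : Matrix m m 𝕜} {B : Matrix n n 𝕜} (hA : A.IsHermitian)
    (hB : B.IsHermitian) (f : ℝ → ℝ) : ∃ p : ℝ[X], aeval A p = cfc f A ∧ aeval B p = cfc f B := by
  let s : Finset ℝ :=
    ((Matrix.finite_real_spectrum (A := A)).union (Matrix.finite_real_spectrum (A := B))).toFinset
  let p : ℝ[X] := Lagrange.interpolate s id f
  have eval_p {x : ℝ} (hx : x ∈ s) : p.eval x = f x :=
    Lagrange.eval_interpolate_at_node f (Set.injOn_id _) hx
  refine ⟨p, ?_, ?_⟩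
  · rw [← cfc_polynomial p A hA]
    exact cfc_congr fun x hx ↦ eval_p (by simp [s, hx])
  · rw [← cfc_polynomial p B hB]
    exact cfc_congr fun x hx ↦ eval_p (by simp [s, hx])

lemma cfc_mul_eq_mul_cfc {A : Matrix m m 𝕜} {B : Matrix n n 𝕜} {V : Matrix m n 𝕜}
    (hA : A.IsHermitian) (hB : B.IsHermitian) (h : A * V = V * B) (f : ℝ → ℝ) :
    cfc f A * V = V * cfc f B := by
  obtain ⟨p, hpA, hpB⟩ := exists_aeval_eq_cfc hA hB f
  rw [← hpA, ← hpB, aeval_mul_eq_mul_aeval h]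

lemma cfc_reindex {A : Matrix m m 𝕜} (hA : A.IsHermitian) (e : m ≃ n) (f : ℝ → ℝ) :
    cfc f (reindex e e A) = reindex e e (cfc f A) := by
  obtain ⟨p, hpA, hpe⟩ := exists_aeval_eq_cfc hA (hA.submatrix e.symm) f
  rw [← hpA, reindex_apply, ← hpe]
  exact aeval_algHom_apply (reindexAlgEquiv ℝ 𝕜 e) A p

lemma cfc_fromBlocks_zero {A : Matrix m m 𝕜} {B : Matrix n n 𝕜} (hA : A.IsHermitian)
    (hB : B.IsHermitian) (f : ℝ → ℝ) :
    cfc f (fromBlocks A 0 0 B) = fromBlocks (cfc f A) 0 0 (cfc f B) := by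
  have hAB : (fromBlocks A 0 0 B).IsHermitian := hA.fromBlocks conjTranspose_zero hB
  let L : Matrix (m ⊕ n) m 𝕜 := fromRows 1 0
  let R : Matrix (m ⊕ n) n 𝕜 := fromRows 0 1
  have left_block : cfc f (fromBlocks A 0 0 B) * L = L * cfc f A :=
    cfc_mul_eq_mul_cfc hAB hA (by simp [L, fromBlocks_mul_fromRows, fromRows_mul]) f
  have right_block : cfc f (fromBlocks A 0 0 B) * R = R * cfc f B :=
    cfc_mul_eq_mul_cfc hAB hB (by simp [R, fromBlocks_mul_fromRows, fromRows_mul]) f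
  calc cfc f (fromBlocks A 0 0 B)
      = cfc f (fromBlocks A 0 0 B) * fromCols L R := by
        rw [fromCols_fromRows_eq_fromBlocks, fromBlocks_one, Matrix.mul_one]
    _ = fromCols (L * cfc f A) (R * cfc f B) := by
        rw [mul_fromCols, left_block, right_block]
    _ = fromBlocks (cfc f A) 0 0 (cfc f B) := by
        simp [L, R, fromRows_mul, fromCols_fromRows_eq_fromBlocks]

end Intertwining

section PositiveDefinite

variable {𝕜 n : Type*} [RCLike 𝕜] [Fintype n] [DecidableEq n] {A : Matrix n n 𝕜} {f : ℝ → ℝ}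

lemma spectrum_subset_Ioi_of_posDef (hA : A.PosDef) : spectrum ℝ A ⊆ Set.Ioi 0 :=
  fun _ ↦ hA.isStrictlyPositive.spectrum_pos

lemma posDef_cfc (hf : ∀ x > 0, 0 < f x) (hA : A.PosDef) : (cfc f A).PosDef := by
  refine isStrictlyPositive_iff_posDef.1
    ((cfc_isStrictlyPositive_iff f A (continuousOn_spectrum f A) hA.isHermitian).2 ?_)
  exact fun x hx ↦ hf x (spectrum_subset_Ioi_of_posDef hA hx)

lemma continuousOn_cfc_posDef (hf : ContinuousOn f (Set.Ioi 0)) :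
    ContinuousOn (cfc f) {A : Matrix n n ℂ | A.PosDef} := by
  have spectrum_nhds : Set.Ioi 0 ∈ 𝓝ˢ (⋃ A ∈ {A : Matrix n n ℂ | A.PosDef}, spectrum ℝ A) :=
    isOpen_Ioi.mem_nhdsSet.2 (Set.iUnion₂_subset fun _ hA ↦ spectrum_subset_Ioi_of_posDef hA)
  exact ContinuousOn.cfc_of_mem_nhdsSet f spectrum_nhds continuousOn_id
    (fun _ hA ↦ PosDef.isHermitian hA) hf

lemma inv_inv_of_posDef (hA : A.PosDef) : A⁻¹⁻¹ = A :=
  nonsing_inv_nonsing_inv A ((isUnit_iff_isUnit_det A).1 hA.isUnit)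

lemma inv_le_inv_of_posDef {A B : Matrix n n ℂ} (hA : A.PosDef) (h : A ≤ B) : B⁻¹ ≤ A⁻¹ := by
  rw [nonsing_inv_eq_ringInverse, nonsing_inv_eq_ringInverse]
  exact CStarAlgebra.ringInverse_le_ringInverse h hA.isStrictlyPositive

lemma inv_le_inv_iff_of_posDef {A B : Matrix n n ℂ} (hA : A.PosDef) (hB : B.PosDef) :
    B⁻¹ ≤ A⁻¹ ↔ A ≤ B := by
  refine ⟨fun h ↦ ?_, inv_le_inv_of_posDef hA⟩
  simpa only [inv_inv_of_posDef hA, inv_inv_of_posDef hB] using inv_le_inv_of_posDef hB.inv h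

lemma posDef_fromBlocks_zero {m n : Type*} [Finite m] [Finite n] {A : Matrix m m 𝕜}
    {B : Matrix n n 𝕜} (hA : A.PosDef) (hB : B.PosDef) : (fromBlocks A 0 0 B).PosDef := by
  classical
  cases nonempty_fintype m
  cases nonempty_fintype n
  have : Invertible A := hA.isUnit.invertible
  have hAB : (fromBlocks A 0 0 B).PosSemidef := by
    simpa using (PosDef.fromBlocks₁₁ (0 : Matrix m n 𝕜) B hA).2 (by simpa using hB.posSemidef)
  rw [hAB.posDef_iff_det_ne_zero, det_fromBlocks_zero₂₁]
  exact mul_ne_zero hA.det_pos.ne' hB.det_pos.ne'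

lemma posDef_warith {n : ℕ} {A B : Matrix (Fin n) (Fin n) ℂ} (hA : A.PosDef) (hB : B.PosDef)
    {t : ℝ} (ht : t ∈ Set.Icc (0 : ℝ) 1) : (warith t A B).PosDef := by
  rcases ht.1.eq_or_lt with rfl | ht₀
  · simpa [warith] using hA
  · exact PosDef.posSemidef_add (hA.posSemidef.smul (sub_nonneg.2 ht.2)) (hB.smul ht₀)

end PositiveDefinite

section Jensen

lemma le_smul_conjugate_add_smul_conjugate {R : Type*} [Ring R] [StarRing R] [PartialOrder R]
    [StarOrderedRing R] [Algebra ℝ R] [StarModule ℝ R] [PosSMulMono ℝ R] {a p : R} (ha : 0 ≤ a)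
    (hp : IsSelfAdjoint p) {ε : ℝ} (hε : 0 < ε) :
    a ≤ (1 + ε) • (p * a * p) + (1 + ε⁻¹) • ((1 - p) * a * (1 - p)) := by
  have hq : IsSelfAdjoint (ε • p - (1 - p)) :=
    ((IsSelfAdjoint.all ε).smul hp).sub ((IsSelfAdjoint.one R).sub hp)
  have nonneg : 0 ≤ ε⁻¹ • ((ε • p - (1 - p)) * a * (ε • p - (1 - p))) :=
    smul_nonneg (by positivity) (hq.conjugate_nonneg ha)
  rw [← sub_nonneg]
  convert nonneg using 1
  simp only [mul_sub, sub_mul, mul_smul_comm, smul_mul_assoc, one_mul, mul_one, smul_sub]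
  match_scalars <;> field_simp <;> ring

variable {m n : Type*} [Fintype m] [DecidableEq m] [Fintype n] [DecidableEq n] {f : ℝ → ℝ}

lemma OperatorMonotone.cfc_le_cfc (hf : OperatorMonotone f) {A B : Matrix n n ℂ} (hA : A.PosDef)
    (hAB : A ≤ B) : cfc f A ≤ cfc f B := by
  have hB : B.PosDef := by simpa using hA.add_posSemidef hAB
  let e := Fintype.equivFin n
  have h : (reindex e e (cfc f B) - reindex e e (cfc f A)).PosSemidef := by
    rw [← cfc_reindex hA.isHermitian, ← cfc_reindex hB.isHermitian]
    exact hf _ _ _ (hA.submatrix e.symm.injective) (hB.submatrix e.symm.injective)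
      (PosSemidef.submatrix hAB e.symm)
  exact (posSemidef_submatrix_equiv e.symm).1 h

lemma OperatorMonotone.conjTranspose_mul_cfc_mul_le_cfc_smul (hf : OperatorMonotone f)
    {A : Matrix m m ℂ} (hA : A.PosDef) {V : Matrix m n ℂ} (hV : Vᴴ * V = 1) {ε : ℝ} (hε : 0 < ε) :
    Vᴴ * cfc f A * V ≤ cfc f ((1 + ε) • (Vᴴ * A * V)) := by
  set P := V * Vᴴ with hP
  set D := (1 + ε) • (P * A * P) + (1 + ε⁻¹) • ((1 - P) * A * (1 - P)) with hD
  have hAD : A ≤ D := le_smul_conjugate_add_smul_conjugate hA.posSemidef.nonneg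
    (isHermitian_mul_conjTranspose_self V) hε
  have D_posDef : D.PosDef := by simpa using hA.add_posSemidef hAD
  have PV : P * V = V := by rw [Matrix.mul_assoc, hV, Matrix.mul_one]
  have DV : D * V = V * ((1 + ε) • (Vᴴ * A * V)) := by
    simp only [hD, Matrix.add_mul, Matrix.smul_mul, Matrix.mul_assoc, Matrix.sub_mul,
      Matrix.one_mul, PV, sub_self, Matrix.mul_zero, smul_zero, add_zero, Matrix.mul_smul]
    rw [hP, Matrix.mul_assoc]
  have compression_isHermitian : ((1 + ε) • (Vᴴ * A * V)).IsHermitian :=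
    (isHermitian_conjTranspose_mul_mul V hA.isHermitian).smul (IsSelfAdjoint.all _)
  calc Vᴴ * cfc f A * V
      ≤ Vᴴ * cfc f D * V := by
        have := (hf.cfc_le_cfc hA hAD).conjTranspose_mul_mul_same V
        rwa [Matrix.mul_sub, Matrix.sub_mul] at this
    _ = cfc f ((1 + ε) • (Vᴴ * A * V)) := by
        rw [Matrix.mul_assoc, cfc_mul_eq_mul_cfc D_posDef.isHermitian compression_isHermitian DV,
          ← Matrix.mul_assoc, hV, Matrix.one_mul]

theorem OperatorMonotone.conjTranspose_mul_cfc_mul_le_cfc (hf : OperatorMonotone f)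
    (hfc : ContinuousOn f (Set.Ioi 0)) {A : Matrix m m ℂ} (hA : A.PosDef) {V : Matrix m n ℂ}
    (hV : Vᴴ * V = 1) : Vᴴ * cfc f A * V ≤ cfc f (Vᴴ * A * V) := by
  have hB : (Vᴴ * A * V).PosDef :=
    hA.conjTranspose_mul_mul_same fun x y hxy ↦ by
      simpa [mulVec_mulVec, hV] using congr(Vᴴ *ᵥ $hxy)
  have tendsto_scaled : Tendsto (fun ε : ℝ ↦ (1 + ε) • (Vᴴ * A * V)) (𝓝[>] 0)
      (𝓝[{B | B.PosDef}] (Vᴴ * A * V)) := by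
    refine tendsto_nhdsWithin_iff.2 ⟨tendsto_nhdsWithin_of_tendsto_nhds ?_, ?_⟩
    · exact Continuous.tendsto' (by fun_prop) _ _ (by simp)
    · filter_upwards [self_mem_nhdsWithin] with ε (hε : 0 < ε)
      exact hB.smul (by positivity)
  refine ge_of_tendsto ((continuousOn_cfc_posDef hfc _ hB).tendsto.comp tendsto_scaled) ?_
  filter_upwards [self_mem_nhdsWithin] with ε hε
  exact hf.conjTranspose_mul_cfc_mul_le_cfc_smul hA hV hε

end Jensen

section Concave

/-- Operator concavity on positive definite matrices: `f(A) ∇_t f(B) ≤ f(A ∇_t B)` for matrices of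
every size, via the continuous functional calculus. -/
def OperatorConcave (f : ℝ → ℝ) : Prop :=
  ∀ (n : ℕ) (A B : Matrix (Fin n) (Fin n) ℂ), A.PosDef → B.PosDef → ∀ t ∈ Set.Icc (0 : ℝ) 1,
    MLE (warith t (cfc f A) (cfc f B)) (cfc f (warith t A B))

/-- The isometry `x ↦ (√(1-t) x, √t x)` of `ℂⁿ` into `ℂⁿ ⊕ ℂⁿ`, along which the compression of
`A ⊕ B` is `A ∇_t B`. -/
noncomputable def warithIsometry (n : ℕ) (t : ℝ) : Matrix (Fin n ⊕ Fin n) (Fin n) ℂ :=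
  fromRows (√(1 - t) • 1) (√t • 1)

variable {n : ℕ} {t : ℝ} {f : ℝ → ℝ}

lemma warithIsometry_compression (ht : t ∈ Set.Icc (0 : ℝ) 1) (A B : Matrix (Fin n) (Fin n) ℂ) :
    (warithIsometry n t)ᴴ * fromBlocks A 0 0 B * warithIsometry n t = warith t A B := by
  simp [warithIsometry, warith, conjTranspose_fromRows_eq_fromCols_conjTranspose,
    fromCols_mul_fromBlocks, fromCols_mul_fromRows, smul_smul, Real.mul_self_sqrt ht.1,
    Real.mul_self_sqrt (sub_nonneg.2 ht.2)]

lemma warithIsometry_conjTranspose_mul_self (ht : t ∈ Set.Icc (0 : ℝ) 1) :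
    (warithIsometry n t)ᴴ * warithIsometry n t = 1 := by
  simpa [warith, ← add_smul] using warithIsometry_compression ht (1 : Matrix (Fin n) (Fin n) ℂ) 1

theorem OperatorMonotone.operatorConcave (hf : OperatorMonotone f)
    (hfc : ContinuousOn f (Set.Ioi 0)) : OperatorConcave f := by
  intro n A B hA hB t ht
  have jensen := hf.conjTranspose_mul_cfc_mul_le_cfc hfc (posDef_fromBlocks_zero hA hB)
    (warithIsometry_conjTranspose_mul_self ht)
  rwa [cfc_fromBlocks_zero hA.isHermitian hB.isHermitian, warithIsometry_compression ht,
    warithIsometry_compression ht] at jensen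

lemma OperatorConcave.smul_cfc_le_cfc_warith_one (hf : OperatorConcave f)
    (hf_pos : ∀ x > 0, 0 < f x) {A B : Matrix (Fin n) (Fin n) ℂ} (hA : A.PosDef) (hAB : A ≤ B)
    (ht : t ∈ Set.Ioo (0 : ℝ) 1) : (1 - t) • cfc f A ≤ cfc f (warith t B 1) := by
  set C := ((1 - t) / t) • (B - A) + 1 with hC
  have C_posDef : C.PosDef := PosDef.posSemidef_add
    (PosSemidef.smul hAB (div_nonneg (sub_pos.2 ht.2).le ht.1.le)) PosDef.one
  have warith_eq : warith t A C = warith t B 1 := by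
    have : t ≠ 0 := ht.1.ne'
    simp only [warith, hC]
    match_scalars <;> field_simp
    ring
  calc (1 - t) • cfc f A
      ≤ warith t (cfc f A) (cfc f C) :=
        le_add_of_nonneg_right (smul_nonneg ht.1.le (posDef_cfc hf_pos C_posDef).posSemidef.nonneg)
    _ ≤ cfc f (warith t A C) := hf n A C hA C_posDef t (Set.Ioo_subset_Icc_self ht)
    _ = cfc f (warith t B 1) := by rw [warith_eq]

theorem OperatorConcave.operatorMonotone (hf : OperatorConcave f)
    (hfc : ContinuousOn f (Set.Ioi 0)) (hf_pos : ∀ x > 0, 0 < f x) : OperatorMonotone f := by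
  intro n A B hA hB hAB
  have tendsto_left : Tendsto (fun t : ℝ ↦ (1 - t) • cfc f A) (𝓝[>] 0) (𝓝 (cfc f A)) :=
    tendsto_nhdsWithin_of_tendsto_nhds (Continuous.tendsto' (by fun_prop) _ _ (by simp))
  have tendsto_warith : Tendsto (fun t ↦ warith t B 1) (𝓝[>] 0) (𝓝[{B | B.PosDef}] B) := by
    refine tendsto_nhdsWithin_iff.2 ⟨tendsto_nhdsWithin_of_tendsto_nhds ?_, ?_⟩
    · exact Continuous.tendsto' (by unfold warith; fun_prop) _ _ (by simp [warith])
    · filter_upwards [Ioo_mem_nhdsGT zero_lt_one] with t ht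
      exact posDef_warith hB PosDef.one (Set.Ioo_subset_Icc_self ht)
  refine le_of_tendsto_of_tendsto tendsto_left
    ((continuousOn_cfc_posDef hfc B hB).tendsto.comp tendsto_warith) ?_
  filter_upwards [Ioo_mem_nhdsGT zero_lt_one] with t ht
  exact hf.smul_cfc_le_cfc_warith_one hf_pos hA hAB ht

theorem operatorMonotone_iff_operatorConcave (hfc : ContinuousOn f (Set.Ioi 0))
    (hf_pos : ∀ x > 0, 0 < f x) : OperatorMonotone f ↔ OperatorConcave f :=
  ⟨fun hf ↦ hf.operatorConcave hfc, fun hf ↦ hf.operatorMonotone hfc hf_pos⟩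

end Concave

section InvAdjoint

/-- The adjoint `f*(x) = f(x⁻¹)⁻¹` of a function on `(0, ∞)`, in the sense of Kubo and Ando. -/
noncomputable def invAdjoint (f : ℝ → ℝ) (x : ℝ) : ℝ := (f x⁻¹)⁻¹

variable {f : ℝ → ℝ}

lemma invAdjoint_invAdjoint (f : ℝ → ℝ) : invAdjoint (invAdjoint f) = f := by
  ext x
  simp [invAdjoint]

lemma invAdjoint_pos (hf : ∀ x > 0, 0 < f x) : ∀ x > 0, 0 < invAdjoint f x :=
  fun x hx ↦ inv_pos.2 (hf x⁻¹ (inv_pos.2 hx))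

lemma continuousOn_invAdjoint (hfc : ContinuousOn f (Set.Ioi 0)) (hf : ∀ x > 0, 0 < f x) :
    ContinuousOn (invAdjoint f) (Set.Ioi 0) := by
  have inv_mapsTo : Set.MapsTo (·⁻¹) (Set.Ioi (0 : ℝ)) (Set.Ioi 0) :=
    fun _ hx ↦ Set.mem_Ioi.2 (inv_pos.2 hx)
  have inv_continuousOn : ContinuousOn (·⁻¹) (Set.Ioi (0 : ℝ)) :=
    continuousOn_inv₀.mono fun _ hx ↦ (Set.mem_Ioi.1 hx).ne'
  exact (hfc.comp inv_continuousOn inv_mapsTo).inv₀ fun x hx ↦ (hf _ (inv_mapsTo hx)).ne'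

lemma cfc_invAdjoint_inv {𝕜 n : Type*} [RCLike 𝕜] [Fintype n] [DecidableEq n]
    (hf : ∀ x > 0, f x ≠ 0) {A : Matrix n n 𝕜} (hA : A.PosDef) :
    cfc (invAdjoint f) A⁻¹ = (cfc f A)⁻¹ := by
  have hA' : IsSelfAdjoint A := hA.isHermitian
  calc cfc (invAdjoint f) A⁻¹
      = cfc (invAdjoint f) (cfc (·⁻¹ : ℝ → ℝ) A) := by
        rw [cfc_ringInverse_id A hA.isUnit, nonsing_inv_eq_ringInverse]
    _ = cfc (fun x ↦ (f x)⁻¹) A := by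
        rw [← cfc_comp' (invAdjoint f) (·⁻¹) A
          ((finite_real_spectrum.image _).continuousOn _) (continuousOn_spectrum _ A)]
        simp only [invAdjoint, inv_inv]
    _ = (cfc f A)⁻¹ := by
        rw [cfc_inv f A (fun x hx ↦ hf x (spectrum_subset_Ioi_of_posDef hA hx))
          (continuousOn_spectrum f A), nonsing_inv_eq_ringInverse]

lemma OperatorMonotone.invAdjoint (hf : OperatorMonotone f) (hf_pos : ∀ x > 0, 0 < f x) :
    OperatorMonotone (invAdjoint f) := by
  have cfc_eq {n : ℕ} {A : Matrix (Fin n) (Fin n) ℂ} (hA : A.PosDef) :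
      cfc (_root_.invAdjoint f) A = (cfc f A⁻¹)⁻¹ := by
    rw [← cfc_invAdjoint_inv (fun x hx ↦ (hf_pos x hx).ne') hA.inv, inv_inv_of_posDef hA]
  intro n A B hA hB hAB
  rw [cfc_eq hA, cfc_eq hB]
  exact inv_le_inv_of_posDef (posDef_cfc hf_pos hB.inv)
    (hf.cfc_le_cfc hB.inv (inv_le_inv_of_posDef hA hAB))

lemma operatorMonotone_invAdjoint_iff (hf : ∀ x > 0, 0 < f x) :
    OperatorMonotone (invAdjoint f) ↔ OperatorMonotone f := by
  refine ⟨fun h ↦ ?_, fun h ↦ h.invAdjoint hf⟩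
  simpa only [invAdjoint_invAdjoint] using h.invAdjoint (invAdjoint_pos hf)

lemma cfc_wharm_le_wharm_cfc_iff (hf : ∀ x > 0, 0 < f x) {n : ℕ}
    {A B : Matrix (Fin n) (Fin n) ℂ} (hA : A.PosDef) (hB : B.PosDef) {t : ℝ}
    (ht : t ∈ Set.Icc (0 : ℝ) 1) :
    MLE (cfc f (wharm t A B)) (wharm t (cfc f A) (cfc f B)) ↔
      MLE (warith t (cfc (invAdjoint f) A⁻¹) (cfc (invAdjoint f) B⁻¹))
        (cfc (invAdjoint f) (warith t A⁻¹ B⁻¹)) := by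
  have hg := invAdjoint_pos hf
  have hM : (warith t A⁻¹ B⁻¹).PosDef := posDef_warith hA.inv hB.inv ht
  have cfc_wharm : cfc f (wharm t A B) = (cfc (invAdjoint f) (warith t A⁻¹ B⁻¹))⁻¹ := by
    rw [← cfc_invAdjoint_inv (fun x hx ↦ (hg x hx).ne') hM, invAdjoint_invAdjoint]
    rfl
  have wharm_cfc : wharm t (cfc f A) (cfc f B) =
      (warith t (cfc (invAdjoint f) A⁻¹) (cfc (invAdjoint f) B⁻¹))⁻¹ := by
    rw [cfc_invAdjoint_inv (fun x hx ↦ (hf x hx).ne') hA,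
      cfc_invAdjoint_inv (fun x hx ↦ (hf x hx).ne') hB]
    rfl
  rw [cfc_wharm, wharm_cfc]
  exact inv_le_inv_iff_of_posDef
    (posDef_warith (posDef_cfc hg hA.inv) (posDef_cfc hg hB.inv) ht) (posDef_cfc hg hM)

lemma operatorConcave_invAdjoint_iff (hf : ∀ x > 0, 0 < f x) :
    OperatorConcave (invAdjoint f) ↔
      ∀ (n : ℕ) (A B : Matrix (Fin n) (Fin n) ℂ), A.PosDef → B.PosDef → ∀ t ∈ Set.Icc (0 : ℝ) 1,
        MLE (cfc f (wharm t A B)) (wharm t (cfc f A) (cfc f B)) := by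
  refine ⟨fun h n A B hA hB t ht ↦ ?_, fun h n A B hA hB t ht ↦ ?_⟩
  · exact (cfc_wharm_le_wharm_cfc_iff hf hA hB ht).2 (h n A⁻¹ B⁻¹ hA.inv hB.inv t ht)
  · simpa only [inv_inv_of_posDef hA, inv_inv_of_posDef hB] using
      (cfc_wharm_le_wharm_cfc_iff hf hA.inv hB.inv ht).1 (h n A⁻¹ B⁻¹ hA.inv hB.inv t ht)

end InvAdjoint

theorem stmt_6 (f : ℝ → ℝ) (hf : ContinuousOn f (Set.Ioi 0))
    (hf' : ∀ x ∈ Set.Ioi (0:ℝ), f x ∈ Set.Ioi (0:ℝ)) :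
    OperatorMonotone f ↔
      ∀ (n : ℕ) (A B : Matrix (Fin n) (Fin n) ℂ), A.PosDef → B.PosDef →
        ∀ t ∈ Set.Icc (0:ℝ) 1,
          MLE (cfc f (wharm t A B)) (wharm t (cfc f A) (cfc f B)) := by
  calc OperatorMonotone f
      ↔ OperatorMonotone (invAdjoint f) := (operatorMonotone_invAdjoint_iff hf').symm
    _ ↔ OperatorConcave (invAdjoint f) :=
        operatorMonotone_iff_operatorConcave (continuousOn_invAdjoint hf hf') (invAdjoint_pos hf')
    _ ↔ _ := operatorConcave_invAdjoint_iff hf'
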